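/- arXiv:1910.04472 — 2 statements merged into one kernel-verified Lean document; each statement's English description precedes it below -/
import Mathlib

section
/- (Delsarte) Let q be a prime power and let m ≥ n ≥ d ≥ 1 be integers. Let C ⊆ F_q^{m×n} be an F_q-linear subspace such that every nonzero element of C has rank at least d and |C| = q^{m(n−d+1)} (i.e., C is a linear MRD code with minimum rank distance d). Then for every r with d ≤ r ≤ n, the number of elements of C having rank exactly r equals [n choose r]_q · Σ_{i=0}^{r−d} (−1)^i · q^{i(i−1)/2} · [r choose i]_q · (q^{m(r−d+1−i)} − 1), where [a choose b]_q = ∏_{j=0}^{b−1} (q^{a−j} − 1)/(q^{b−j} − 1) is the Gaussian binomial coefficient. -/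
/-!
Let `C` be an MRD code of `m × n` matrices with minimum distance `d` and `U` a subspace of
`F ^ n` of dimension `d - 1`. Two codewords never differ by a nonzero matrix with
row space inside `U`, so by cardinality `C` contains exactly one representative of every coset of
the space of those matrices. Hence, for a codeword `B` and a subspace `W` of dimension
`w ≥ d - 1`, exactly `q ^ (m * (w + 1 - d))` codewords `A` satisfy
`rowSpace (A - B) ≤ W`, whatever the code. Möbius inversion over the lattice of subspaces, where
`μ(U, V) = (-1) ^ k * q ^ (k choose 2)` with `k = dim V - dim U`, then counts the codewords for
which the row space of `A - B` is a given subspace, and it remains to sum over the subspaces of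
dimension `r`. The `- 1` in each summand comes from the vanishing of the alternating sum
`∑ i, (-1) ^ i * q ^ (i choose 2) * [r choose i]_q`, which also absorbs the terms with `i > r - d`.
-/

open Module

/-- The Gaussian binomial coefficient
`[a choose b]_q = ∏_{j=0}^{b−1} (q^{a−j} − 1)/(q^{b−j} − 1)` for `0 ≤ b ≤ a`,
and `0` otherwise. -/
noncomputable def gaussBinom (q : ℚ) (a b : ℕ) : ℚ :=
  if b ≤ a then ∏ j ∈ Finset.range b, (q ^ (a - j) - 1) / (q ^ (b - j) - 1) else 0

open Finset

section GaussBinom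

variable {q : ℚ}

theorem gaussBinom_eq_zero_of_lt {a b : ℕ} (h : a < b) : gaussBinom q a b = 0 :=
  if_neg h.not_ge

@[simp]
theorem gaussBinom_zero_right (a : ℕ) : gaussBinom q a 0 = 1 := by
  simp [gaussBinom]

/-- The `q`-factorial `∏_{j=1}^{n} (q^j − 1)`, without the usual normalisation by `(q − 1)^n`,
which cancels in Gaussian binomial coefficients. -/
def qFactorial (q : ℚ) (n : ℕ) : ℚ := ∏ j ∈ range n, (q ^ (j + 1) - 1)

@[simp]
theorem qFactorial_zero : qFactorial q 0 = 1 := rfl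

theorem qFactorial_succ (n : ℕ) : qFactorial q (n + 1) = qFactorial q n * (q ^ (n + 1) - 1) :=
  prod_range_succ _ _

theorem pow_succ_sub_one_ne_zero (hq : 1 < q) (n : ℕ) : q ^ (n + 1) - 1 ≠ 0 :=
  (sub_pos.2 (one_lt_pow₀ hq n.succ_ne_zero)).ne'

theorem qFactorial_ne_zero (hq : 1 < q) (n : ℕ) : qFactorial q n ≠ 0 :=
  prod_ne_zero_iff.2 fun j _ => pow_succ_sub_one_ne_zero hq j

theorem prod_pow_sub_one_mul_qFactorial (a b : ℕ) :
    (∏ j ∈ range b, (q ^ (a + b - j) - 1)) * qFactorial q a = qFactorial q (a + b) := by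
  induction b with
  | zero => simp
  | succ b ih =>
    rw [prod_range_succ', ← add_assoc, qFactorial_succ, ← ih]
    simp only [Nat.add_sub_add_right, Nat.sub_zero]
    ring

theorem gaussBinom_eq_qFactorial_div (hq : 1 < q) {a b : ℕ} (h : b ≤ a) :
    gaussBinom q a b = qFactorial q a / (qFactorial q b * qFactorial q (a - b)) := by
  have hnum := prod_pow_sub_one_mul_qFactorial (q := q) (a - b) b
  have hden := prod_pow_sub_one_mul_qFactorial (q := q) 0 b
  rw [Nat.sub_add_cancel h] at hnum
  rw [zero_add, qFactorial_zero, mul_one] at hden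
  rw [gaussBinom, if_pos h, prod_div_distrib, hden, ← hnum,
    mul_div_mul_right _ _ (qFactorial_ne_zero hq _)]

theorem gaussBinom_self (hq : 1 < q) (a : ℕ) : gaussBinom q a a = 1 := by
  simp [gaussBinom_eq_qFactorial_div hq, qFactorial_ne_zero hq]

theorem gaussBinom_symm (hq : 1 < q) {a b : ℕ} (h : b ≤ a) :
    gaussBinom q a (a - b) = gaussBinom q a b := by
  rw [gaussBinom_eq_qFactorial_div hq h, gaussBinom_eq_qFactorial_div hq (a.sub_le b),
    Nat.sub_sub_self h, mul_comm]

theorem gaussBinom_succ_succ (hq : 1 < q) (a b : ℕ) :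
    gaussBinom q (a + 1) (b + 1) = gaussBinom q a b + q ^ (b + 1) * gaussBinom q a (b + 1) := by
  rcases lt_trichotomy a b with h | rfl | h
  · simp [gaussBinom_eq_zero_of_lt, h, h.trans b.lt_succ_self]
  · simp [gaussBinom_self hq, gaussBinom_eq_zero_of_lt]
  · obtain ⟨c, rfl⟩ := Nat.exists_eq_add_of_lt h
    rw [gaussBinom_eq_qFactorial_div hq (by omega), gaussBinom_eq_qFactorial_div hq (by omega),
      gaussBinom_eq_qFactorial_div hq (by omega),
      show b + c + 1 + 1 - (b + 1) = c + 1 by omega, show b + c + 1 - b = c + 1 by omega,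
      show b + c + 1 - (b + 1) = c by omega]
    simp only [qFactorial_succ]
    have hb := qFactorial_ne_zero hq b
    have hc := qFactorial_ne_zero hq c
    have hb' := pow_succ_sub_one_ne_zero hq b
    have hc' := pow_succ_sub_one_ne_zero hq c
    field_simp
    ring

theorem sum_range_neg_one_pow_mul_gaussBinom_succ (hq : 1 < q) (a b : ℕ) :
    ∑ i ∈ range (b + 1), (-1) ^ i * q ^ i.choose 2 * gaussBinom q (a + 1) i =
      (-1) ^ b * q ^ (b + 1).choose 2 * gaussBinom q a b := by
  induction b with
  | zero => simp
  | succ b ih =>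
    rw [sum_range_succ, ih, gaussBinom_succ_succ hq, Nat.choose_succ_succ' (b + 1) 1,
      Nat.choose_one_right, pow_add]
    ring

theorem sum_range_neg_one_pow_mul_gaussBinom (hq : 1 < q) (a : ℕ) :
    ∑ i ∈ range (a + 1), (-1) ^ i * q ^ i.choose 2 * gaussBinom q a i = if a = 0 then 1 else 0 := by
  cases a with
  | zero => simp
  | succ a =>
    rw [sum_range_neg_one_pow_mul_gaussBinom_succ hq, gaussBinom_eq_zero_of_lt a.lt_succ_self]
    simp

theorem sum_range_gaussBinom_mul_pow (hq : 1 < q) {d r : ℕ} (hd : 1 ≤ d) (hdr : d ≤ r) (x : ℚ) :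
    ∑ i ∈ range (r + 1), (-1) ^ i * q ^ i.choose 2 * gaussBinom q r i * x ^ (r - i + 1 - d) =
      ∑ i ∈ range (r - d + 1),
        (-1) ^ i * q ^ i.choose 2 * gaussBinom q r i * (x ^ (r - d + 1 - i) - 1) := by
  calc
    _ = ∑ i ∈ range (r + 1),
          (-1) ^ i * q ^ i.choose 2 * gaussBinom q r i * (x ^ (r - i + 1 - d) - 1) := by
      simp_rw [mul_sub, sum_sub_distrib, mul_one]
      rw [sum_range_neg_one_pow_mul_gaussBinom hq, if_neg (by omega), sub_zero]
    _ = ∑ i ∈ range (r - d + 1),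
          (-1) ^ i * q ^ i.choose 2 * gaussBinom q r i * (x ^ (r - i + 1 - d) - 1) := by
      refine (sum_subset (range_mono (by omega)) fun i _ hi => ?_).symm
      rw [mem_range] at hi
      rw [show r - i + 1 - d = 0 by omega, pow_zero, sub_self, mul_zero]
    _ = _ := by
      refine sum_congr rfl fun i hi => ?_
      rw [mem_range] at hi
      rw [show r - i + 1 - d = r - d + 1 - i by omega]

end GaussBinom

section Counting

theorem natCard_mem_eq_sum {α β : Type*} [Finite α] (f : α → β) (s : Finset β) :
    Nat.card {a // f a ∈ s} = ∑ b ∈ s, Nat.card {a // f a = b} := by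
  classical
  have := Fintype.ofFinite α
  simp_rw [Nat.card_eq_fintype_card, Fintype.card_subtype]
  rw [card_eq_sum_card_fiberwise (f := f) (t := s) fun a ha => by simpa using ha]
  refine sum_congr rfl fun b hb => congrArg card ?_
  ext a
  simp +contextual [hb]

theorem eq_mu_of_sum_Icc {𝕜 P : Type*} [Ring 𝕜] [PartialOrder P] [LocallyFiniteOrder P]
    [DecidableEq P] {f : P → P → 𝕜}
    (hf : ∀ a b, a ≤ b → ∑ x ∈ Icc a b, f a x = if a = b then 1 else 0) {a b : P} (hab : a ≤ b) :
    f a b = IncidenceAlgebra.mu 𝕜 a b := by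
  classical
  let f' : IncidenceAlgebra 𝕜 P := ⟨fun a b => if a ≤ b then f a b else 0, fun _ _ h => if_neg h⟩
  have hf' : f' * IncidenceAlgebra.zeta 𝕜 = 1 := by
    ext a b hab
    rw [IncidenceAlgebra.mul_apply, IncidenceAlgebra.one_apply, ← hf a b hab]
    refine sum_congr rfl fun x hx => ?_
    simp [f', (mem_Icc.1 hx).1, (mem_Icc.1 hx).2]
  rw [← left_inv_eq_right_inv hf' IncidenceAlgebra.zeta_mul_mu]
  exact (if_pos hab).symm

end Counting

section FiniteDimensional

variable {F E : Type*} [DivisionRing F] [AddCommGroup E] [Module F E]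

theorem finrank_span_range_of_linearIndependent {k : ℕ} {s : Fin k → E}
    (hs : LinearIndependent F s) : finrank F (Submodule.span F (Set.range s)) = k := by
  simpa using finrank_span_eq_card hs

theorem exists_submodule_le_finrank_eq {W : Submodule F E} {k : ℕ} (hk : k ≤ finrank F W) :
    ∃ U ≤ W, finrank F U = k := by
  obtain ⟨s, hs⟩ := exists_linearIndependent_of_le_finrank hk
  exact ⟨Submodule.span F (Set.range (W.subtype ∘ s)),
    Submodule.span_le.2 (Set.range_subset_iff.2 fun i => (s i).2),
    finrank_span_range_of_linearIndependent (hs.map' W.subtype W.ker_subtype)⟩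

theorem finrank_map_mkQ_add_finrank [FiniteDimensional F E] {U W : Submodule F E} (h : U ≤ W) :
    finrank F (W.map U.mkQ) + finrank F U = finrank F W := by
  have := (U.mkQ.domRestrict W).finrank_range_add_finrank_ker
  rwa [LinearMap.range_domRestrict, LinearMap.ker_domRestrict, Submodule.ker_mkQ,
    ← Submodule.submoduleOf, (Submodule.submoduleOfEquivOfLe h).finrank_eq] at this

end FiniteDimensional

section Subspaces

variable {F E : Type*} [Field F] [Fintype F] [AddCommGroup E] [Module F E] [Finite E]

theorem one_lt_card_cast : (1 : ℚ) < Fintype.card F :=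
  mod_cast Fintype.one_lt_card

theorem cast_prod_pow_sub_pow {q k n : ℕ} (hq : 0 < q) (hk : k ≤ n) :
    ((∏ i : Fin k, (q ^ n - q ^ (i : ℕ)) : ℕ) : ℚ) =
      (∏ i ∈ range k, (q : ℚ) ^ i) *
        ∏ i ∈ range k, ((q : ℚ) ^ (n - i) - 1) := by
  rw [prod_range, prod_range, ← prod_mul_distrib, Nat.cast_prod]
  refine prod_congr rfl fun i _ => ?_
  have hi : (i : ℕ) ≤ n := i.2.le.trans hk
  rw [Nat.cast_sub (Nat.pow_le_pow_right hq hi), mul_sub, ← pow_add,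
    Nat.add_sub_cancel' hi]
  push_cast
  ring

theorem natCard_linearIndependent_span_eq {U : Submodule F E} {k : ℕ} (hU : finrank F U = k) :
    Nat.card {s : {s : Fin k → E // LinearIndependent F s} //
        Submodule.span F (Set.range s.1) = U} =
      ∏ i : Fin k, (Fintype.card F ^ k - Fintype.card F ^ (i : ℕ)) := by
  rw [← hU, ← card_linearIndependent le_rfl, hU]
  refine Nat.card_congr
    { toFun := fun s => ⟨fun i => ⟨s.1.1 i, s.2.le (Submodule.subset_span ⟨i, rfl⟩)⟩,
        .of_comp U.subtype s.1.2⟩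
      invFun := fun t => ⟨⟨fun i => t.1 i, t.2.map' U.subtype U.ker_subtype⟩,
        Submodule.eq_of_le_of_finrank_eq
          (Submodule.span_le.2 (Set.range_subset_iff.2 fun i => (t.1 i).2)) ?_⟩
      left_inv := fun _ => rfl
      right_inv := fun _ => rfl }
  exact (finrank_span_range_of_linearIndependent
    (t.2.map' U.subtype U.ker_subtype)).trans hU.symm

theorem natCard_submodule_finrank_eq (k : ℕ) :
    (Nat.card {U : Submodule F E // finrank F U = k} : ℚ) =
      gaussBinom (Fintype.card F) (finrank F E) k := by
  classical
  have := Fintype.ofFinite (Submodule F E)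
  rcases lt_or_ge (finrank F E) k with hk | hk
  · have : IsEmpty {U : Submodule F E // finrank F U = k} :=
      ⟨fun U => (U.1.finrank_le.trans_lt hk).ne U.2⟩
    rw [gaussBinom_eq_zero_of_lt hk, Nat.card_of_isEmpty, Nat.cast_zero]
  -- Count ordered bases of all `k`-dimensional subspaces in two ways.
  have hcount : Nat.card {s : Fin k → E // LinearIndependent F s} =
      Nat.card {U : Submodule F E // finrank F U = k} *
        ∏ i : Fin k, (Fintype.card F ^ k - Fintype.card F ^ (i : ℕ)) := by
    have hspan (s : {s : Fin k → E // LinearIndependent F s}) :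
        Submodule.span F (Set.range s.1) ∈ ({U | finrank F U = k} : Finset (Submodule F E)) := by
      simpa using finrank_span_range_of_linearIndependent s.2
    rw [← Nat.card_congr (Equiv.subtypeUnivEquiv hspan), natCard_mem_eq_sum,
      sum_congr rfl fun U hU => natCard_linearIndependent_span_eq (mem_filter.1 hU).2,
      sum_const, smul_eq_mul, Nat.card_eq_fintype_card, Fintype.card_subtype]
  rw [card_linearIndependent hk] at hcount
  have hcast := congrArg (Nat.cast : ℕ → ℚ) hcount
  have hq := one_lt_card_cast (F := F)
  have hpow : ∏ i ∈ range k, (Fintype.card F : ℚ) ^ i ≠ 0 :=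
    prod_ne_zero_iff.2 fun i _ => (pow_pos (by linarith) i).ne'
  have hden : ∏ i ∈ range k, ((Fintype.card F : ℚ) ^ (k - i) - 1) ≠ 0 :=
    prod_ne_zero_iff.2 fun i hi =>
      (sub_pos.2 (one_lt_pow₀ hq (Nat.sub_ne_zero_of_lt (mem_range.1 hi)))).ne'
  rw [Nat.cast_mul, cast_prod_pow_sub_pow Fintype.card_pos hk,
    cast_prod_pow_sub_pow Fintype.card_pos le_rfl, mul_left_comm] at hcast
  rw [gaussBinom, if_pos hk, prod_div_distrib, mul_left_cancel₀ hpow hcast,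
    mul_div_cancel_right₀ _ hden]

theorem sum_submodule [Fintype (Submodule F E)] (g : ℕ → ℚ) :
    ∑ U : Submodule F E, g (finrank F U) =
      ∑ k ∈ range (finrank F E + 1), gaussBinom (Fintype.card F) (finrank F E) k * g k := by
  classical
  rw [← sum_fiberwise_of_maps_to (g := fun U : Submodule F E => finrank F U)
    fun U _ => mem_range_succ_iff.2 U.finrank_le]
  refine sum_congr rfl fun k _ => ?_
  rw [sum_congr rfl fun U hU => congrArg g (mem_filter.1 hU).2, sum_const, nsmul_eq_mul,
    ← natCard_submodule_finrank_eq, Nat.card_eq_fintype_card, Fintype.card_subtype]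

theorem sum_Icc_submodule [LocallyFiniteOrder (Submodule F E)] {U V : Submodule F E} (h : U ≤ V)
    (g : ℕ → ℚ) :
    ∑ W ∈ Icc U V, g (finrank F W - finrank F U) =
      ∑ k ∈ range (finrank F V - finrank F U + 1),
        gaussBinom (Fintype.card F) (finrank F V - finrank F U) k * g k := by
  have : Finite (E ⧸ U) := Quotient.finite _
  have := Fintype.ofFinite (Submodule F (V.map U.mkQ))
  rw [← Nat.eq_sub_of_add_eq (finrank_map_mkQ_add_finrank h), ← sum_submodule]
  refine sum_nbij' (fun W => (W.map U.mkQ).submoduleOf (V.map U.mkQ))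
    (fun W => (W.map (V.map U.mkQ).subtype).comap U.mkQ) (by simp) ?_ ?_ ?_ ?_
  · intro W _
    have hW := Submodule.comap_mono (f := U.mkQ) (Submodule.map_subtype_le _ W)
    rw [Submodule.comap_map_mkQ, sup_eq_right.2 h] at hW
    exact mem_Icc.2 ⟨Submodule.le_comap_mkQ _ _, hW⟩
  · intro W hW
    rw [mem_Icc] at hW
    rw [Submodule.submoduleOf, Submodule.map_comap_subtype,
      inf_eq_right.2 (Submodule.map_mono hW.2), Submodule.comap_map_mkQ, sup_eq_right.2 hW.1]
  · intro W _
    rw [Submodule.map_comap_eq_of_surjective U.mkQ_surjective, Submodule.submoduleOf,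
      Submodule.comap_map_eq_of_injective (Submodule.subtype_injective _)]
  · intro W hW
    rw [mem_Icc] at hW
    rw [(Submodule.submoduleOfEquivOfLe (Submodule.map_mono hW.2)).finrank_eq,
      ← Nat.eq_sub_of_add_eq (finrank_map_mkQ_add_finrank hW.1)]

theorem mu_submodule [LocallyFiniteOrder (Submodule F E)] [DecidableEq (Submodule F E)]
    {U V : Submodule F E} (h : U ≤ V) :
    IncidenceAlgebra.mu ℚ U V =
      (-1) ^ (finrank F V - finrank F U) *
        (Fintype.card F : ℚ) ^ (finrank F V - finrank F U).choose 2 := by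
  refine (eq_mu_of_sum_Icc (f := fun U V : Submodule F E => (-1) ^ (finrank F V - finrank F U) *
    (Fintype.card F : ℚ) ^ (finrank F V - finrank F U).choose 2) (fun U V h => ?_) h).symm
  rw [sum_Icc_submodule h fun k => (-1) ^ k * (Fintype.card F : ℚ) ^ k.choose 2]
  simp_rw [mul_comm (gaussBinom _ _ _)]
  rw [sum_range_neg_one_pow_mul_gaussBinom one_lt_card_cast]
  refine if_congr ?_ rfl rfl
  rw [Nat.sub_eq_zero_iff_le]
  exact ⟨Submodule.eq_of_le_of_finrank_le h, fun hUV => hUV ▸ le_rfl⟩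

theorem natCard_eq_of_natCard_le {α : Type*} [Finite α] {f : α → Submodule F E} {φ : ℕ → ℚ}
    (hf : ∀ V, (Nat.card {a // f a ≤ V} : ℚ) = φ (finrank F V)) (V : Submodule F E) :
    (Nat.card {a // f a = V} : ℚ) =
      ∑ i ∈ range (finrank F V + 1),
        (-1) ^ i * (Fintype.card F : ℚ) ^ i.choose 2 *
          gaussBinom (Fintype.card F) (finrank F V) i * φ (finrank F V - i) := by
  classical
  have := Fintype.ofFinite (Submodule F E)
  let := Fintype.toLocallyFiniteOrder (α := Submodule F E)
  have hsum (W : Submodule F E) :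
      φ (finrank F W) = ∑ U ∈ Iic W, (Nat.card {a // f a = U} : ℚ) := by
    rw [← hf W, ← Nat.cast_sum, ← natCard_mem_eq_sum]
    simp
  rw [IncidenceAlgebra.moebius_inversion_bot _ _ hsum V, ← Icc_bot,
    sum_congr rfl fun U hU => by rw [mu_submodule (mem_Icc.1 hU).2]]
  have hrank := sum_Icc_submodule (bot_le (a := V)) fun k => (-1) ^ (finrank F V - k) *
    (Fintype.card F : ℚ) ^ (finrank F V - k).choose 2 * φ k
  simp only [finrank_bot, Nat.sub_zero] at hrank
  rw [hrank, ← sum_range_reflect]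
  refine sum_congr rfl fun i hi => ?_
  have hi := mem_range_succ_iff.1 hi
  rw [Nat.add_sub_cancel, Nat.sub_sub_self hi, gaussBinom_symm one_lt_card_cast hi]
  ring

theorem natCard_finrank_eq_of_natCard_le {α : Type*} [Finite α] {f : α → Submodule F E} {φ : ℕ → ℚ}
    (hf : ∀ V, (Nat.card {a // f a ≤ V} : ℚ) = φ (finrank F V)) (r : ℕ) :
    (Nat.card {a // finrank F (f a) = r} : ℚ) =
      gaussBinom (Fintype.card F) (finrank F E) r *
        ∑ i ∈ range (r + 1),
          (-1) ^ i * (Fintype.card F : ℚ) ^ i.choose 2 *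
            gaussBinom (Fintype.card F) r i * φ (r - i) := by
  classical
  have := Fintype.ofFinite (Submodule F E)
  have hfib := natCard_mem_eq_sum f {U | finrank F U = r}
  simp only [mem_filter_univ] at hfib
  rw [hfib, Nat.cast_sum, sum_congr rfl fun U hU => (natCard_eq_of_natCard_le hf U).trans
    (by rw [(mem_filter.1 hU).2]), sum_const, nsmul_eq_mul, ← natCard_submodule_finrank_eq,
    Nat.card_eq_fintype_card, Fintype.card_subtype]

end Subspaces

section RowSpace

variable {F m n : Type*} [Field F]

/-- The row space of a matrix. -/
def rowSpace (A : Matrix m n F) : Submodule F (n → F) :=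
  Submodule.span F (Set.range A.row)

/-- The `m`-rowed matrices all of whose rows lie in `W`. -/
def rowsIn (m : Type*) (W : Submodule F (n → F)) : Submodule F (Matrix m n F) where
  carrier := {A | ∀ i, A.row i ∈ W}
  add_mem' hA hB i := W.add_mem (hA i) (hB i)
  zero_mem' _ := W.zero_mem
  smul_mem' c _ hA i := W.smul_mem c (hA i)

theorem mem_rowsIn {A : Matrix m n F} {W : Submodule F (n → F)} :
    A ∈ rowsIn m W ↔ rowSpace A ≤ W := by
  rw [rowSpace, Submodule.span_le, Set.range_subset_iff]
  rfl

theorem rowsIn_mono {U W : Submodule F (n → F)} (h : U ≤ W) : rowsIn m U ≤ rowsIn m W :=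
  fun _ hA => mem_rowsIn.2 ((mem_rowsIn.1 hA).trans h)

theorem natCard_rowsIn [Fintype F] [Fintype m] [Finite n] (W : Submodule F (n → F)) :
    Nat.card (rowsIn m W) = Fintype.card F ^ (Fintype.card m * finrank F W) := by
  have e : rowsIn m W ≃ (m → W) :=
    { toFun := fun A i => ⟨A.1 i, A.2 i⟩
      invFun := fun g => ⟨fun i => g i, fun i => (g i).2⟩
      left_inv := fun _ => rfl
      right_inv := fun _ => rfl }
  rw [Nat.card_congr e, Nat.card_fun, Module.natCard_eq_pow_finrank (K := F), ← pow_mul, mul_comm,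
    Nat.card_eq_fintype_card, Nat.card_eq_fintype_card]

theorem finrank_rowSpace [Finite m] [Fintype n] (A : Matrix m n F) :
    finrank F (rowSpace A) = A.rank :=
  A.rank_eq_finrank_span_row.symm

end RowSpace

theorem natCard_sub_mem_mul_natCard {G : Type*} [AddCommGroup G] {C : Set G} {R S : AddSubgroup G}
    (hC : AddSubgroup.IsComplement C (R : Set G)) (hRS : R ≤ S) (b : G) :
    Nat.card {a : C // (a : G) - b ∈ S} * Nat.card R = Nat.card S := by
  rw [← Nat.card_prod]
  refine Nat.card_eq_of_bijective
    (fun x => (⟨x.1.1 - b + x.2, S.add_mem x.1.2 (hRS x.2.2)⟩ : S)) ⟨?_, ?_⟩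
  · rintro ⟨a, x⟩ ⟨a', x'⟩ h
    have hsum : (a.1 + x : G) = a'.1 + x' := by
      simpa [sub_add_eq_add_sub] using congrArg Subtype.val h
    obtain ⟨ha, rfl⟩ := Prod.ext_iff.1 (@hC.1 (a.1, x) (a'.1, x') hsum)
    rw [Subtype.ext ha]
  · intro s
    obtain ⟨⟨a, x⟩, h⟩ := hC.2 (s + b)
    have ha : (a : G) - b = s - x := sub_eq_sub_iff_add_eq_add.2 h
    exact ⟨⟨⟨a, ha ▸ S.sub_mem s.2 (hRS x.2)⟩, x⟩, Subtype.ext (by simp [ha])⟩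

/-- A maximum rank distance code: a not necessarily linear set of matrices, any two of which are at
rank distance at least `d`, whose size attains the Singleton bound for matrices with at least as
many rows as columns. The truncated subtraction in the exponent is meant for
`d ≤ Fintype.card n`. -/
structure IsMRD {F m n : Type*} [Field F] [Fintype F] [Fintype m] [Fintype n] (d : ℕ)
    (C : Set (Matrix m n F)) : Prop where
  le_rank_sub : C.Pairwise fun A B => d ≤ (A - B).rank
  natCard_eq : Nat.card C = Fintype.card F ^ (Fintype.card m * (Fintype.card n - d + 1))

namespace IsMRD

variable {F m n : Type*} [Field F] [Fintype F] [Fintype m] [Fintype n] {d : ℕ}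
  {C : Set (Matrix m n F)}

theorem eq_of_rowSpace_sub_le (hC : IsMRD d C) {A B : Matrix m n F} (hA : A ∈ C) (hB : B ∈ C)
    {W : Submodule F (n → F)} (hW : finrank F W < d) (h : rowSpace (A - B) ≤ W) : A = B := by
  by_contra hAB
  have hrank := Submodule.finrank_mono h
  rw [finrank_rowSpace] at hrank
  exact ((hC.le_rank_sub hA hB hAB).trans hrank).not_gt hW

theorem isComplement_rowsIn (hC : IsMRD d C) (hdn : d ≤ Fintype.card n)
    {U : Submodule F (n → F)} (hU : finrank F U + 1 = d) :
    AddSubgroup.IsComplement C ((rowsIn m U).toAddSubgroup : Set (Matrix m n F)) := by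
  refine Function.Injective.bijective_of_nat_card_le ?_ ?_
  · rintro ⟨A, X⟩ ⟨B, Y⟩ h
    have hsub : A.1 - B.1 = Y.1 - X.1 := by
      rw [sub_eq_sub_iff_add_eq_add, add_comm Y.1]
      exact h
    have hAB : A = B := Subtype.ext (hC.eq_of_rowSpace_sub_le A.2 B.2 (hU ▸ Nat.lt_succ_self _)
      (mem_rowsIn.1 (hsub ▸ (rowsIn m U).sub_mem Y.2 X.2)))
    subst hAB
    simpa using h
  · have hR : Nat.card ((rowsIn m U).toAddSubgroup : Set (Matrix m n F)) = _ := natCard_rowsIn U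
    have hsum : Fintype.card n - d + 1 + finrank F U = Fintype.card n := by omega
    rw [Nat.card_prod, hC.natCard_eq, hR, ← pow_add, ← mul_add, hsum,
      Module.natCard_eq_pow_finrank (K := F), Nat.card_eq_fintype_card, finrank_matrix,
      finrank_self, mul_one]

theorem natCard_rowSpace_sub_le (hC : IsMRD d C) (hd : 1 ≤ d) (hdn : d ≤ Fintype.card n)
    {B : Matrix m n F} (hB : B ∈ C) (W : Submodule F (n → F)) :
    Nat.card {A : C // rowSpace (A.1 - B) ≤ W} =
      Fintype.card F ^ (Fintype.card m * (finrank F W + 1 - d)) := by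
  rcases lt_or_ge (finrank F W) d with hW | hW
  · have : Unique {A : C // rowSpace (A.1 - B) ≤ W} :=
      { default := ⟨⟨B, hB⟩, mem_rowsIn.1 (by simp)⟩
        uniq := fun A => Subtype.ext (Subtype.ext (hC.eq_of_rowSpace_sub_le A.1.2 hB hW A.2)) }
    rw [Nat.card_unique, Nat.sub_eq_zero_of_le hW, mul_zero, pow_zero]
  · obtain ⟨U, hUW, hU⟩ := exists_submodule_le_finrank_eq (W := W) (k := d - 1) (by omega)
    have hcard := natCard_sub_mem_mul_natCard (hC.isComplement_rowsIn hdn (U := U) (by omega))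
      (Submodule.toAddSubgroup_mono (rowsIn_mono hUW)) B
    have hR : Nat.card (rowsIn m U).toAddSubgroup = _ := natCard_rowsIn U
    have hS : Nat.card (rowsIn m W).toAddSubgroup = _ := natCard_rowsIn W
    rw [hR, hS, hU] at hcard
    simp only [Submodule.mem_toAddSubgroup, mem_rowsIn] at hcard
    refine Nat.eq_of_mul_eq_mul_right (pow_pos Fintype.card_pos _) (hcard.trans ?_)
    rw [← pow_add, ← mul_add, show finrank F W + 1 - d + (d - 1) = finrank F W by omega]

end IsMRD

theorem delsarte_rank_distribution_general {F m n : Type*} [Field F] [Fintype F] [Fintype m]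
    [Fintype n] {d : ℕ} {C : Set (Matrix m n F)} (hC : IsMRD d C) (hd : 1 ≤ d)
    {B : Matrix m n F} (hB : B ∈ C) {r : ℕ} (hdr : d ≤ r) (hrn : r ≤ Fintype.card n) :
    (Nat.card {A : Matrix m n F // A ∈ C ∧ (A - B).rank = r} : ℚ) =
      gaussBinom (Fintype.card F) (Fintype.card n) r *
        ∑ i ∈ range (r - d + 1),
          (-1 : ℚ) ^ i * (Fintype.card F : ℚ) ^ (i * (i - 1) / 2) *
            gaussBinom (Fintype.card F) r i *
              ((Fintype.card F : ℚ) ^ (Fintype.card m * (r - d + 1 - i)) - 1) := by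
  have hcount (W : Submodule F (n → F)) :
      (Nat.card {A : C // rowSpace (A.1 - B) ≤ W} : ℚ) =
        ((Fintype.card F : ℚ) ^ Fintype.card m) ^ (finrank F W + 1 - d) := by
    rw [hC.natCard_rowSpace_sub_le hd (hdr.trans hrn) hB, pow_mul]
    push_cast
    rfl
  have hrank := natCard_finrank_eq_of_natCard_le
    (φ := fun k => ((Fintype.card F : ℚ) ^ Fintype.card m) ^ (k + 1 - d)) hcount r
  simp only [finrank_rowSpace, finrank_fintype_fun_eq_card] at hrank
  rw [← Nat.card_congr (Equiv.subtypeSubtypeEquivSubtypeInter (· ∈ C) fun A => (A - B).rank = r),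
    hrank, sum_range_gaussBinom_mul_pow one_lt_card_cast hd hdr]
  simp_rw [Nat.choose_two_right, pow_mul]

/-- **Delsarte's theorem** on the rank distribution of linear MRD codes: if
`C ⊆ F_q^{m×n}` (with `m ≥ n ≥ d ≥ 1`) is a linear code in which every nonzero codeword
has rank at least `d` and `|C| = q^{m(n−d+1)}`, then for every `d ≤ r ≤ n` the number of
codewords of rank exactly `r` equals
`[n choose r]_q · Σ_{i=0}^{r−d} (−1)^i q^{i(i−1)/2} [r choose i]_q (q^{m(r−d+1−i)} − 1)`. -/
theorem delsarte_rank_distribution (q m n d : ℕ) (hq : IsPrimePow q)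
    (hmn : n ≤ m) (hnd : d ≤ n) (hd : 1 ≤ d)
    (F : Type*) [Field F] [Fintype F] (hcard : Fintype.card F = q)
    (C : Submodule F (Matrix (Fin m) (Fin n) F))
    (hdist : ∀ A ∈ C, A ≠ 0 → d ≤ A.rank)
    (hsize : Nat.card C = q ^ (m * (n - d + 1))) :
    ∀ r, d ≤ r → r ≤ n →
      (Nat.card {A : Matrix (Fin m) (Fin n) F // A ∈ C ∧ A.rank = r} : ℚ) =
        gaussBinom q n r *
          ∑ i ∈ Finset.range (r - d + 1),
            (-1 : ℚ) ^ i * (q : ℚ) ^ (i * (i - 1) / 2) * gaussBinom q r i *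
              ((q : ℚ) ^ (m * (r - d + 1 - i)) - 1) := by
  subst hcard
  have hC : IsMRD d (C : Set (Matrix (Fin m) (Fin n) F)) :=
    ⟨fun A hA B hB hAB => hdist _ (C.sub_mem hA hB) (sub_ne_zero.2 hAB), by simpa using hsize⟩
  intro r hdr hrn
  simpa using delsarte_rank_distribution_general hC hd C.zero_mem hdr (by simpa using hrn)
end

section
/- Let q be a prime power, d an even positive integer with d/2 ≤ k, and n1, n2, t integers with n1 ≥ k, n2 ≥ k, and 0 ≤ t ≤ min{n1 − k, n2 − k}. Then A_q(n1 + n2, d, k) ≥ q^{n1·(k − d/2 + 1)} · A_q(n2, d, k) + A_q(n1 − t, d, k) · Λ(q, k, n2 + t, d/2, k − d/2), where Λ(q, m, n, δ, u) denotes the maximum size of a set of matrices in F_q^{m×n} with pairwise rank distance at least δ in which every element has rank at most u. -/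
open Module

/-- The subspace distance `d_S(U, W) = dim(U + W) − dim(U ∩ W)`. -/
noncomputable def subspaceDist {F : Type*} [Field F] {n : ℕ}
    (U W : Submodule F (Fin n → F)) : ℕ :=
  finrank F ↥(U ⊔ W) - finrank F ↥(U ⊓ W)

/-- `A_q(n, d, k)`: the maximum size of an `(n, M, d, k)_q` constant dimension code, i.e.
of a set of `k`-dimensional subspaces of `F_q^n` with pairwise subspace distance
at least `d`. -/
noncomputable def maxCDCSize (F : Type*) [Field F] [Fintype F] (n d k : ℕ) : ℕ :=
  sSup {M | ∃ C : Finset (Submodule F (Fin n → F)), C.card = M ∧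
    (∀ U ∈ C, finrank F ↥U = k) ∧
    ∀ U ∈ C, ∀ W ∈ C, U ≠ W → d ≤ subspaceDist U W}

/-- `Λ(q, m, n, δ, u)`: the maximum size of a rank-restricted rank-metric code, i.e. of a
set of matrices in `F_q^{m×n}` with pairwise rank distance at least `δ` in which every
element has rank at most `u`. -/
noncomputable def maxRRMCSize (F : Type*) [Field F] [Fintype F] (m n δ u : ℕ) : ℕ :=
  sSup {N | ∃ Q : Finset (Matrix (Fin m) (Fin n) F), Q.card = N ∧
    (∀ A ∈ Q, ∀ B ∈ Q, A ≠ B → δ ≤ (A - B).rank) ∧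
    ∀ A ∈ Q, A.rank ≤ u}

/-!
A constant dimension code is presented by injective maps `E → V` with `dim E = k` whose ranges are
the codewords; as all codewords have dimension `k`, distance `2δ` means that any two of them meet
in dimension at most `k - δ`. Pairing such a presentation with a rank-metric code, `x ↦ (g x, f x)`,
gives another one: if the `g`'s differ, project to the first component, and if they agree, the
intersection is a copy of `ker (f - f')`. Gabidulin codes supply large rank-metric codes: a nonzero
`q`-polynomial with `r` coefficients has degree at most `q ^ (r - 1)`, hence a kernel of dimension
less than `r`.

Write `F ^ (n1 + n2) = A × T × B` with `dim A = n1 - t`, `dim T = t`, `dim B = n2`. One half of the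
code pairs an optimal code in `B` with a Gabidulin code in `A × T`, the other half pairs an optimal
code in `A` with an optimal rank-restricted code in `T × B`. The projection to `B` is injective on
every codeword of the first half and sends every codeword of the second half to a space of
dimension at most `k - δ`, so codewords from different halves also meet in dimension at most
`k - δ`.
-/

section MaximumCard

variable {α : Type*} [Finite α]

theorem bddAbove_setOf_exists_card_eq (P : Finset α → Prop) :
    BddAbove {M | ∃ C : Finset α, C.card = M ∧ P C} := by
  have := Fintype.ofFinite α
  refine ⟨Fintype.card α, ?_⟩
  rintro _ ⟨C, rfl, -⟩
  exact C.card_le_univ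

theorem exists_card_eq_sSup_card {P : Finset α → Prop} (h : P ∅) :
    ∃ C : Finset α, C.card = sSup {M | ∃ C : Finset α, C.card = M ∧ P C} ∧ P C :=
  Nat.sSup_mem (s := {M | ∃ C : Finset α, C.card = M ∧ P C})
    ⟨0, ∅, Finset.card_empty, h⟩ (bddAbove_setOf_exists_card_eq P)

theorem card_le_sSup_card {P : Finset α → Prop} {C : Finset α} (h : P C) :
    C.card ≤ sSup {M | ∃ C : Finset α, C.card = M ∧ P C} :=
  le_csSup (bddAbove_setOf_exists_card_eq P) ⟨C, rfl, h⟩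

end MaximumCard

section Finrank

variable {R E V W : Type*}

theorem finrank_inf_le_finrank_map_inf_map [Semiring R] [StrongRankCondition R]
    [AddCommMonoid V] [Module R V] [AddCommMonoid W] [Module R W] {p : V →ₗ[R] W}
    {S T : Submodule R V} [Module.Finite R ↥(S.map p ⊓ T.map p)] (hp : Set.InjOn p S) :
    finrank R ↥(S ⊓ T) ≤ finrank R ↥(S.map p ⊓ T.map p) :=
  LinearMap.finrank_le_finrank_of_injective
    (f := p.restrict (q := S.map p ⊓ T.map p) fun _ hx ↦
      ⟨Submodule.mem_map_of_mem hx.1, Submodule.mem_map_of_mem hx.2⟩)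
    fun x y hxy ↦ Subtype.ext (hp x.2.1 y.2.1 (congrArg Subtype.val hxy))

theorem finrank_map_eq_of_injective [Semiring R] [AddCommMonoid V] [Module R V]
    [AddCommMonoid W] [Module R W] {f : V →ₗ[R] W} (hf : Function.Injective f)
    (S : Submodule R V) : finrank R ↥(S.map f) = finrank R S :=
  (Submodule.equivMapOfInjective f hf S).finrank_eq.symm

theorem finrank_ker_comp_le_of_injective [Semiring R] [StrongRankCondition R]
    [AddCommMonoid E] [Module R E] [AddCommMonoid V] [Module R V] [AddCommMonoid W] [Module R W]
    (f : V →ₗ[R] W) {g : E →ₗ[R] V} (hg : Function.Injective g) [Module.Finite R f.ker] :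
    finrank R (f ∘ₗ g).ker ≤ finrank R f.ker :=
  LinearMap.finrank_le_finrank_of_injective (f := g.restrict (q := f.ker) fun _ hx ↦ hx)
    fun _ _ hxy ↦ Subtype.ext (hg (congrArg Subtype.val hxy))

theorem range_prod_inf_range_prod [Ring R] [AddCommGroup E] [Module R E] [AddCommGroup V]
    [Module R V] [AddCommGroup W] [Module R W] {g : E →ₗ[R] V} (hg : Function.Injective g)
    (f f' : E →ₗ[R] W) :
    (g.prod f).range ⊓ (g.prod f').range = (f - f').ker.map (g.prod f) := by
  ext v
  constructor
  · rintro ⟨⟨x, rfl⟩, y, hy⟩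
    have hgy : g y = g x := congrArg Prod.fst hy
    have hfy : f' y = f x := congrArg Prod.snd hy
    rw [hg hgy] at hfy
    exact ⟨x, by simp [hfy], rfl⟩
  · rintro ⟨x, hx, rfl⟩
    exact ⟨⟨x, rfl⟩, x, Prod.ext rfl (sub_eq_zero.mp hx).symm⟩

end Finrank

/-- A rank-metric code of minimum distance at least `δ`, as an indexed family of linear maps
instead of a set of matrices. -/
def IsRankMetricCode {F E W ι : Type*} [Field F] [AddCommGroup E] [Module F E] [AddCommGroup W]
    [Module F W] (δ : ℕ) (f : ι → E →ₗ[F] W) : Prop :=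
  ∀ ⦃i j⦄, i ≠ j → δ ≤ finrank F (f i - f j).range

/-- A constant dimension code in `V` of dimension `dim E` and minimum subspace distance at least
`2δ`, as an indexed family of injective linear maps whose ranges are the codewords. The distance is
encoded through the dimensions of the intersections. -/
structure IsConstantDimCode {F E V ι : Type*} [Field F] [AddCommGroup E] [Module F E]
    [AddCommGroup V] [Module F V] (δ : ℕ) (g : ι → E →ₗ[F] V) : Prop where
  injective (i : ι) : Function.Injective (g i)
  finrank_inf_add_le ⦃i j : ι⦄ : i ≠ j →
    finrank F ↥((g i).range ⊓ (g j).range) + δ ≤ finrank F E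

section Linkage

variable {F E V W ι κ : Type*} [Field F] [AddCommGroup E] [Module F E] [AddCommGroup V]
  [Module F V] [AddCommGroup W] [Module F W] {δ : ℕ}

theorem IsRankMetricCode.comp_injective {f : ι → E →ₗ[F] V} (hf : IsRankMetricCode δ f)
    {φ : V →ₗ[F] W} (hφ : Function.Injective φ) : IsRankMetricCode δ fun i ↦ φ ∘ₗ f i := by
  intro i j hij
  rw [← LinearMap.comp_sub, LinearMap.range_comp, finrank_map_eq_of_injective hφ]
  exact hf hij

namespace IsConstantDimCode

theorem comp_injective {g : ι → E →ₗ[F] V} (hg : IsConstantDimCode δ g) {φ : V →ₗ[F] W}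
    (hφ : Function.Injective φ) : IsConstantDimCode δ fun i ↦ φ ∘ₗ g i where
  injective i := hφ.comp (hg.injective i)
  finrank_inf_add_le i j hij := by
    rw [LinearMap.range_comp, LinearMap.range_comp, ← Submodule.map_inf φ hφ,
      finrank_map_eq_of_injective hφ]
    exact hg.finrank_inf_add_le hij

theorem injective_range {g : ι → E →ₗ[F] V} (hg : IsConstantDimCode δ g) (hδ : 0 < δ) :
    Function.Injective fun i ↦ (g i).range := by
  intro i j (hij : (g i).range = (g j).range)
  by_contra hne
  have hle := hg.finrank_inf_add_le hne
  rw [← hij, inf_idem, LinearMap.finrank_range_of_inj (hg.injective i)] at hle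
  omega

theorem prod [FiniteDimensional F E] {g : ι → E →ₗ[F] V} {f : κ → E →ₗ[F] W}
    (hg : IsConstantDimCode δ g) (hf : IsRankMetricCode δ f) :
    IsConstantDimCode δ fun x : ι × κ ↦ (g x.1).prod (f x.2) where
  injective x := .of_comp (f := Prod.fst) (hg.injective x.1)
  finrank_inf_add_le := by
    rintro ⟨i, j⟩ ⟨i', j'⟩ hne
    dsimp only
    obtain rfl | hi := eq_or_ne i i'
    · have hinj : Function.Injective ((g i).prod (f j)) :=
        .of_comp (f := Prod.fst) (hg.injective i)
      have hrank := hf (ne_of_apply_ne (Prod.mk i) hne)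
      rw [range_prod_inf_range_prod (hg.injective i), finrank_map_eq_of_injective hinj,
        ← (f j - f j').finrank_range_add_finrank_ker]
      omega
    · have hproj : Set.InjOn (LinearMap.fst F V W) ((g i).prod (f j)).range :=
        Function.Injective.injOn_range (f := (g i).prod (f j)) (hg.injective i)
      have hle := finrank_inf_le_finrank_map_inf_map
        (T := ((g i').prod (f j')).range) hproj
      rw [← LinearMap.range_comp, ← LinearMap.range_comp, LinearMap.fst_prod,
        LinearMap.fst_prod] at hle
      exact (Nat.add_le_add_right hle δ).trans (hg.finrank_inf_add_le hi)

theorem sumElim {g : ι → E →ₗ[F] V} {h : κ → E →ₗ[F] V} (hg : IsConstantDimCode δ g)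
    (hh : IsConstantDimCode δ h)
    (hgh : ∀ i j, finrank F ↥((g i).range ⊓ (h j).range) + δ ≤ finrank F E) :
    IsConstantDimCode δ (Sum.elim g h) where
  injective := Sum.rec hg.injective hh.injective
  finrank_inf_add_le := by
    rintro (i | i) (j | j) hne
    · exact hg.finrank_inf_add_le (ne_of_apply_ne Sum.inl hne)
    · exact hgh i j
    · rw [inf_comm]
      exact hgh j i
    · exact hh.finrank_inf_add_le (ne_of_apply_ne Sum.inr hne)

variable {A T B ι' κ' : Type*} [AddCommGroup A] [Module F A] [AddCommGroup T] [Module F T]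
  [AddCommGroup B] [Module F B] [FiniteDimensional F E]

theorem linkage {gB : ι → E →ₗ[F] B} {fAT : κ → E →ₗ[F] A × T} {gA : ι' → E →ₗ[F] A}
    {fTB : κ' → E →ₗ[F] T × B} (hgB : IsConstantDimCode δ gB) (hfAT : IsRankMetricCode δ fAT)
    (hgA : IsConstantDimCode δ gA) (hfTB : IsRankMetricCode δ fTB)
    (hrank : ∀ j, finrank F (fTB j).range + δ ≤ finrank F E) :
    IsConstantDimCode δ (Sum.elim
      (fun x : ι × κ ↦ (LinearEquiv.prodComm F B (A × T) ≪≫ₗ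
        LinearEquiv.prodAssoc F A T B).toLinearMap ∘ₗ (gB x.1).prod (fAT x.2))
      (fun y : ι' × κ' ↦ (gA y.1).prod (fTB y.2))) := by
  refine ((hgB.prod hfAT).comp_injective (LinearEquiv.injective _)).sumElim (hgA.prod hfTB) ?_
  rintro ⟨i, j⟩ ⟨i', j'⟩
  set s := (LinearEquiv.prodComm F B (A × T) ≪≫ₗ LinearEquiv.prodAssoc F A T B).toLinearMap ∘ₗ
    (gB i).prod (fAT j)
  set p : A × T × B →ₗ[F] B := LinearMap.snd F T B ∘ₗ LinearMap.snd F A (T × B)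
  have hp : Set.InjOn p s.range := Function.Injective.injOn_range (f := s) (hgB.injective i)
  have hmap : ((gA i').prod (fTB j')).range.map p =
      (fTB j').range.map (LinearMap.snd F T B) := by
    rw [← LinearMap.range_comp, LinearMap.comp_assoc, LinearMap.snd_prod, LinearMap.range_comp]
  calc finrank F ↥(s.range ⊓ ((gA i').prod (fTB j')).range) + δ
      ≤ finrank F ↥(s.range.map p ⊓ ((gA i').prod (fTB j')).range.map p) + δ :=
        Nat.add_le_add_right (finrank_inf_le_finrank_map_inf_map hp) δ
    _ ≤ finrank F ↥((fTB j').range.map (LinearMap.snd F T B)) + δ :=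
        Nat.add_le_add_right (Submodule.finrank_mono (inf_le_right.trans_eq hmap)) δ
    _ ≤ finrank F (fTB j').range + δ :=
        Nat.add_le_add_right (Submodule.finrank_map_le _ _) δ
    _ ≤ finrank F E := hrank j'

end IsConstantDimCode

end Linkage

section OptimalCodes

variable {F E V W ι : Type*} [Field F] [AddCommGroup E] [Module F E] [AddCommGroup V]
  [Module F V] [FiniteDimensional F V] [AddCommGroup W] [Module F W] [FiniteDimensional F W]
  {m n k δ : ℕ}

theorem two_mul_le_subspaceDist_iff {U W : Submodule F (Fin n → F)} (hU : finrank F U = k)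
    (hW : finrank F W = k) : 2 * δ ≤ subspaceDist U W ↔ finrank F ↥(U ⊓ W) + δ ≤ k := by
  have hsum := Submodule.finrank_sup_add_finrank_inf_eq U W
  have hle : finrank F ↥(U ⊓ W) ≤ finrank F U := Submodule.finrank_mono inf_le_left
  unfold subspaceDist
  omega

theorem exists_injective_range_eq [FiniteDimensional F E] {U : Submodule F V}
    (hU : finrank F U = finrank F E) : ∃ g : E →ₗ[F] V, Function.Injective g ∧ g.range = U := by
  let e : E ≃ₗ[F] U := LinearEquiv.ofFinrankEq E U hU.symm
  refine ⟨U.subtype ∘ₗ e.toLinearMap, U.injective_subtype.comp e.injective, ?_⟩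
  rw [LinearMap.range_comp, LinearEquiv.range, Submodule.map_top, Submodule.range_subtype]

variable [Fintype F]

theorem exists_isConstantDimCode_card_eq_maxCDCSize [FiniteDimensional F E]
    (hE : finrank F E = k) (n δ : ℕ) :
    ∃ g : Fin (maxCDCSize F n (2 * δ) k) → E →ₗ[F] Fin n → F, IsConstantDimCode δ g := by
  obtain ⟨C, hcard, hdim, hdist⟩ := exists_card_eq_sSup_card
    (P := fun C : Finset (Submodule F (Fin n → F)) ↦ (∀ U ∈ C, finrank F U = k) ∧
      ∀ U ∈ C, ∀ W ∈ C, U ≠ W → 2 * δ ≤ subspaceDist U W) (by simp)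
  choose g hinj hrange using fun U : C ↦
    exists_injective_range_eq (E := E) ((hdim U U.2).trans hE.symm)
  let c : Fin (maxCDCSize F n (2 * δ) k) ≃ C := (C.equivFinOfCardEq hcard).symm
  refine ⟨g ∘ c, ⟨fun i ↦ hinj (c i), fun i j hij ↦ ?_⟩⟩
  have hne : (c i : Submodule F (Fin n → F)) ≠ c j :=
    Subtype.coe_injective.ne (c.injective.ne hij)
  rw [Function.comp_apply, Function.comp_apply, hrange, hrange, hE]
  exact (two_mul_le_subspaceDist_iff (hdim _ (c i).2) (hdim _ (c j).2)).mp
    (hdist _ (c i).2 _ (c j).2 hne)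

theorem IsConstantDimCode.card_le_maxCDCSize [Fintype ι] {g : ι → E →ₗ[F] V}
    (hg : IsConstantDimCode δ g) (hδ : 0 < δ) (hE : finrank F E = k) (hV : finrank F V = n) :
    Fintype.card ι ≤ maxCDCSize F n (2 * δ) k := by
  classical
  let e : V ≃ₗ[F] Fin n → F := LinearEquiv.ofFinrankEq _ _ (by simpa using hV)
  have hcode : IsConstantDimCode δ fun i ↦ e.toLinearMap ∘ₗ g i := hg.comp_injective e.injective
  have hdim (i : ι) : finrank F (e.toLinearMap ∘ₗ g i).range = k :=
    (LinearMap.finrank_range_of_inj (hcode.injective i)).trans hE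
  rw [← Finset.card_univ, ← Finset.card_image_of_injective _ (hcode.injective_range hδ)]
  refine card_le_sSup_card ⟨by simpa using hdim, ?_⟩
  simp only [Finset.mem_image, Finset.mem_univ, true_and]
  rintro _ ⟨i, rfl⟩ _ ⟨j, rfl⟩ hne
  rw [two_mul_le_subspaceDist_iff (hdim i) (hdim j), ← hE]
  exact hcode.finrank_inf_add_le (ne_of_apply_ne (fun i ↦ (e.toLinearMap ∘ₗ g i).range) hne)

theorem exists_isRankMetricCode_card_eq_maxRRMCSize [FiniteDimensional F E]
    (hE : finrank F E = m) (hW : finrank F W = n) (δ u : ℕ) :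
    ∃ f : Fin (maxRRMCSize F m n δ u) → E →ₗ[F] W,
      IsRankMetricCode δ f ∧ ∀ i, finrank F (f i).range ≤ u := by
  obtain ⟨Q, hcard, hdist, hrank⟩ := exists_card_eq_sSup_card
    (P := fun Q : Finset (Matrix (Fin m) (Fin n) F) ↦
      (∀ A ∈ Q, ∀ B ∈ Q, A ≠ B → δ ≤ (A - B).rank) ∧ ∀ A ∈ Q, A.rank ≤ u) (by simp)
  let c : Fin (maxRRMCSize F m n δ u) ≃ Q := (Q.equivFinOfCardEq hcard).symm
  let φ (A : Matrix (Fin m) (Fin n) F) : E →ₗ[F] W :=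
    Matrix.toLin (finBasisOfFinrankEq F E hE) (finBasisOfFinrankEq F W hW) A.transpose
  have hφ (A : Matrix (Fin m) (Fin n) F) : finrank F (φ A).range = A.rank := by
    rw [← Matrix.rank_eq_finrank_range_toLin, Matrix.rank_transpose]
  have hφ_sub (A B : Matrix (Fin m) (Fin n) F) : φ A - φ B = φ (A - B) := by
    simp only [φ, Matrix.transpose_sub, map_sub]
  refine ⟨fun i ↦ φ (c i), fun i j hij ↦ ?_, fun i ↦ (hφ _).trans_le (hrank _ (c i).2)⟩
  rw [hφ_sub, hφ]
  exact hdist _ (c i).2 _ (c j).2 (Subtype.coe_injective.ne (c.injective.ne hij))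

end OptimalCodes

section LinearizedPolynomials

open Polynomial

variable {L : Type*} {q r : ℕ}

/-- The linearized polynomial (or `q`-polynomial) `∑ i < r, a i * X ^ q ^ i`. -/
noncomputable def linearizedPolynomial [Semiring L] (q : ℕ) (a : Fin r → L) : L[X] :=
  ∑ i, C (a i) * X ^ q ^ (i : ℕ)

theorem linearizedPolynomial_ne_zero [Semiring L] (hq : 1 < q) {a : Fin r → L} (ha : a ≠ 0) :
    linearizedPolynomial q a ≠ 0 := by
  obtain ⟨j, hj⟩ := Function.ne_iff.mp ha
  have hcoeff : (linearizedPolynomial q a).coeff (q ^ (j : ℕ)) = a j := by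
    simp [linearizedPolynomial, finsetSum_coeff, coeff_C_mul, coeff_X_pow,
      Nat.pow_right_inj hq, Fin.val_inj]
  intro hzero
  exact hj (by rw [← hcoeff, hzero, coeff_zero, Pi.zero_apply])

theorem natDegree_linearizedPolynomial_le [Semiring L] (hq : 0 < q) (a : Fin r → L) :
    (linearizedPolynomial q a).natDegree ≤ q ^ (r - 1) :=
  natDegree_sum_le_of_forall_le _ _ fun i _ ↦
    (natDegree_C_mul_X_pow_le _ _).trans (Nat.pow_le_pow_right hq (Nat.le_pred_of_lt i.2))

variable {F : Type*} [Field F] [Fintype F] [Field L] [Algebra F L]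

/-- The `F`-linear map induced on `L` by the linearized polynomial with coefficients `a`, as an
`L`-linear function of `a`. -/
noncomputable def linearizedMap (F L : Type*) [Field F] [Fintype F] [Field L] [Algebra F L]
    (r : ℕ) : (Fin r → L) →ₗ[L] L →ₗ[F] L :=
  Fintype.linearCombination L fun i : Fin r ↦
    (FiniteField.frobeniusAlgHom F L ^ (i : ℕ)).toLinearMap

theorem linearizedMap_apply (a : Fin r → L) (x : L) :
    linearizedMap F L r a x = (linearizedPolynomial (Fintype.card F) a).eval x := by
  simp [linearizedMap, linearizedPolynomial, Fintype.linearCombination_apply, eval_finsetSum,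
    AlgHom.coe_pow, FiniteField.coe_frobeniusAlgHom, pow_iterate]

theorem ker_linearizedMap_subset_rootSet {a : Fin r → L} (ha : a ≠ 0) :
    ((linearizedMap F L r a).ker : Set L) ⊆
      (linearizedPolynomial (Fintype.card F) a).rootSet L := by
  intro x hx
  rw [mem_rootSet_of_ne (linearizedPolynomial_ne_zero Fintype.one_lt_card ha),
    coe_aeval_eq_eval, ← linearizedMap_apply]
  exact hx

theorem finite_ker_linearizedMap {a : Fin r → L} (ha : a ≠ 0) :
    Finite (linearizedMap F L r a).ker :=
  (rootSet_finite _ L).subset (ker_linearizedMap_subset_rootSet ha)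

theorem finrank_ker_linearizedMap_lt {a : Fin r → L} (ha : a ≠ 0) :
    finrank F (linearizedMap F L r a).ker < r := by
  have := finite_ker_linearizedMap (F := F) ha
  set K := (linearizedMap F L r a).ker
  set P := linearizedPolynomial (Fintype.card F) a
  have hcard : Fintype.card F ^ finrank F K ≤ Fintype.card F ^ (r - 1) := calc
    Fintype.card F ^ finrank F K = (K : Set L).ncard := by
      rw [← Nat.card_eq_fintype_card, ← natCard_eq_pow_finrank]
      rfl
    _ ≤ (P.rootSet L).ncard :=
      Set.ncard_le_ncard (ker_linearizedMap_subset_rootSet ha) (P.rootSet_finite L)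
    _ ≤ P.natDegree := ncard_rootSet_le P L
    _ ≤ Fintype.card F ^ (r - 1) := natDegree_linearizedPolynomial_le Fintype.card_pos a
  have hle := (Nat.pow_le_pow_iff_right Fintype.one_lt_card).mp hcard
  have hr : 0 < r := Fin.pos (Function.ne_iff.mp ha).choose
  omega

end LinearizedPolynomials

section GabidulinCodes

variable {F E W : Type*} [Field F] [Fintype F] [AddCommGroup E] [Module F E]
  [FiniteDimensional F E] [AddCommGroup W] [Module F W] [FiniteDimensional F W]

theorem isRankMetricCode_linearizedMap_comp {L : Type*} [Field L] [Algebra F L]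
    {g : E →ₗ[F] L} (hg : Function.Injective g) {r δ : ℕ} (hr : δ + r ≤ finrank F E + 1) :
    IsRankMetricCode δ fun a : Fin r → L ↦ linearizedMap F L r a ∘ₗ g := by
  intro a b hab
  rw [← LinearMap.sub_comp, ← map_sub]
  have hlt := finrank_ker_linearizedMap_lt (F := F) (sub_ne_zero.mpr hab)
  have := finite_ker_linearizedMap (F := F) (sub_ne_zero.mpr hab)
  have hle := finrank_ker_comp_le_of_injective (linearizedMap F L r (a - b)) hg
  have hsum := (linearizedMap F L r (a - b) ∘ₗ g).finrank_range_add_finrank_ker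
  omega

theorem exists_isRankMetricCode_gabidulin {k n δ : ℕ} (hE : finrank F E = k)
    (hW : finrank F W = n) (hδ : 0 < δ) (hδk : δ ≤ k) (hkn : k ≤ n) :
    ∃ f : Fin (Fintype.card F ^ (n * (k - δ + 1))) → E →ₗ[F] W, IsRankMetricCode δ f := by
  obtain ⟨p, hp⟩ := CharP.exists F
  have : Fact p.Prime := ⟨CharP.char_is_prime F p⟩
  have : NeZero n := ⟨by omega⟩
  let L := FiniteField.Extension F p n
  have hL : finrank F L = n := FiniteField.finrank_extension F p n
  obtain ⟨g, hg⟩ : ∃ g : E →ₗ[F] L, Function.Injective g :=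
    finrank_le_iff_exists_linearMap.mp (by omega)
  let e : L ≃ₗ[F] W := LinearEquiv.ofFinrankEq L W (hL.trans hW.symm)
  have hcode : IsRankMetricCode δ fun a : Fin (k - δ + 1) → L ↦
      e.toLinearMap ∘ₗ linearizedMap F L (k - δ + 1) a ∘ₗ g :=
    (isRankMetricCode_linearizedMap_comp hg (by omega)).comp_injective e.injective
  have hcard : Nat.card (Fin (k - δ + 1) → L) = Fintype.card F ^ (n * (k - δ + 1)) := by
    rw [Nat.card_fun, Nat.card_fin, natCard_eq_pow_finrank (K := F), hL,
      Nat.card_eq_fintype_card, pow_mul]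
  let c := (Finite.equivFinOfCardEq hcard).symm
  exact ⟨fun i ↦ e.toLinearMap ∘ₗ linearizedMap F L (k - δ + 1) (c i) ∘ₗ g,
    fun _ _ hij ↦ hcode (c.injective.ne hij)⟩

end GabidulinCodes

theorem linkage_lower_bound_with_RRMC_general (F : Type*) [Field F] [Fintype F] {d k n1 n2 t : ℕ}
    (hd : 0 < d) (hdeven : Even d) (hdk : d / 2 ≤ k) (hn1 : k ≤ n1) (ht : t ≤ n1) :
    Fintype.card F ^ (n1 * (k - d / 2 + 1)) * maxCDCSize F n2 d k +
        maxCDCSize F (n1 - t) d k * maxRRMCSize F k (n2 + t) (d / 2) (k - d / 2) ≤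
      maxCDCSize F (n1 + n2) d k := by
  obtain ⟨δ, rfl⟩ := hdeven.two_dvd
  rw [Nat.mul_div_cancel_left δ two_pos] at hdk ⊢
  have hδ : 0 < δ := by omega
  have hE : finrank F (Fin k → F) = k := finrank_fin_fun F
  have hAT : finrank F ((Fin (n1 - t) → F) × (Fin t → F)) = n1 := by simp [ht]
  have hTB : finrank F ((Fin t → F) × (Fin n2 → F)) = n2 + t := by simp [add_comm]
  have hV : finrank F ((Fin (n1 - t) → F) × (Fin t → F) × (Fin n2 → F)) = n1 + n2 := by
    simp only [finrank_prod, finrank_fin_fun]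
    omega
  obtain ⟨gB, hgB⟩ := exists_isConstantDimCode_card_eq_maxCDCSize hE n2 δ
  obtain ⟨gA, hgA⟩ := exists_isConstantDimCode_card_eq_maxCDCSize hE (n1 - t) δ
  obtain ⟨fAT, hfAT⟩ := exists_isRankMetricCode_gabidulin hE hAT hδ hdk hn1
  obtain ⟨fTB, hfTB, hrank⟩ := exists_isRankMetricCode_card_eq_maxRRMCSize hE hTB δ (k - δ)
  have hcode := hgB.linkage hfAT hgA hfTB fun j ↦ by have := hrank j; omega
  simpa [mul_comm] using hcode.card_le_maxCDCSize hδ hE hV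

/-- For `d` even positive with `d/2 ≤ k`, `n1 ≥ k`, `n2 ≥ k`, `0 ≤ t ≤ min{n1−k, n2−k}`:
`A_q(n1+n2, d, k) ≥ q^{n1(k−d/2+1)}·A_q(n2, d, k) + A_q(n1−t, d, k)·Λ(q, k, n2+t, d/2, k−d/2)`. -/
theorem linkage_lower_bound_with_RRMC (q d k n1 n2 t : ℕ) (hq : IsPrimePow q)
    (hd : 0 < d) (hdeven : Even d) (hdk : d / 2 ≤ k)
    (hn1 : k ≤ n1) (hn2 : k ≤ n2) (ht : t ≤ min (n1 - k) (n2 - k))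
    (F : Type*) [Field F] [Fintype F] (hcard : Fintype.card F = q) :
    q ^ (n1 * (k - d / 2 + 1)) * maxCDCSize F n2 d k +
        maxCDCSize F (n1 - t) d k * maxRRMCSize F k (n2 + t) (d / 2) (k - d / 2) ≤
      maxCDCSize F (n1 + n2) d k :=
  hcard ▸ linkage_lower_bound_with_RRMC_general F hd hdeven hdk hn1 (by omega)
end
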